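/- Define ᾱ_1 = 1 and ᾱ_{k+1} = 2/(1 + √(1 + 4/ᾱ_k²)) for k ≥ 1. Let a > 0 and 0 < b < 1 be reals satisfying a(1−b)·2^{2−b} − a·b(1−b)·2^{−b} − 1 ≥ 0. Then for every integer k ≥ 2, ᾱ_k ≥ 2/√((1 + a·k^{−b})·k · ((1 + a·k^{−b})·k + 2)). -/

import Mathlib

/-!
Write `t_k = 1/ᾱ_k` and `s_k = k + a k^{1-b}`; the claim is `4 t_k² ≤ s_k (s_k + 2) = (s_k + 1)² - 1`,
proved by induction on `k ≥ 2`. The recursion reads `2 t_{k+1} = 1 + √(1 + 4 t_k²)`, so the induction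
hypothesis gives `2 t_{k+1} ≤ s_k + 2`. With `s_{k+1} = s_k + 1 + δ` it remains to see that
`2 δ (s_k + 2) ≥ 1`. Bernoulli's inequality gives `δ ≥ a (1-b) (k+1)^{-b}`
(`rpow_sub_rpow_ge`), hence `2 δ (s_k + 2) ≥ 2 a (1-b) (k+1)^{1-b} ≥ 4 a (1-b) 2^{-b}`, which is at
least `1` by the hypothesis `a (1-b) (4-b) 2^{-b} ≥ 1`. The same hypothesis gives
`a 2^{1-b} ≥ 1/2`, which settles `k = 2`, where `2 t_2 = 1 + √5`.
-/

/-- The damping sequence `ᾱ_1 = 1`, `ᾱ_{k+1} = 2/(1 + √(1 + 4/ᾱ_k²))`. -/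
noncomputable def alphaBar : ℕ → ℝ
  | 0 => 1
  | 1 => 1
  | (k + 2) => 2 / (1 + Real.sqrt (1 + 4 / (alphaBar (k + 1)) ^ 2))


lemma alphaBar_pos : ∀ k, 0 < alphaBar k
  | 0 => by simp [alphaBar]
  | 1 => by simp [alphaBar]
  | (k + 2) => by rw [alphaBar]; positivity

lemma four_div_alphaBar_sq (k : ℕ) :
    4 / alphaBar (k + 2) ^ 2 = (1 + √(1 + 4 / alphaBar (k + 1) ^ 2)) ^ 2 := by
  rw [alphaBar]
  have : 0 < 1 + √(1 + 4 / alphaBar (k + 1) ^ 2) := by positivity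
  field_simp
  norm_num

/-- Tangent-line bound for the concave function `x ↦ x ^ (1 - b)` at `x + 1`. -/
lemma rpow_sub_rpow_ge {b x : ℝ} (hb0 : 0 < b) (hb1 : b < 1) (hx : 0 < x) :
    (1 - b) * (x + 1) ^ (-b) ≤ (x + 1) ^ (1 - b) - x ^ (1 - b) := by
  have hx1 : 0 < x + 1 := by linarith
  have hs : (-1 : ℝ) ≤ -(1 / (x + 1)) := by
    have : 1 / (x + 1) ≤ 1 := by rw [div_le_one hx1]; linarith
    linarith
  have hB := rpow_one_add_le_one_add_mul_self hs (p := 1 - b) (by linarith) (by linarith)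
  have hx' : x = (x + 1) * (1 + -(1 / (x + 1))) := by field_simp; ring
  have hmul : x ^ (1 - b) = (x + 1) ^ (1 - b) * (1 + -(1 / (x + 1))) ^ (1 - b) := by
    rw [← Real.mul_rpow hx1.le (by linarith), ← hx']
  have hpow : (x + 1) ^ (1 - b) = (x + 1) * (x + 1) ^ (-b) := by
    rw [sub_eq_add_neg, Real.rpow_add hx1, Real.rpow_one]
  have hle := mul_le_mul_of_nonneg_left hB (Real.rpow_nonneg hx1.le (1 - b))
  have hexp : (x + 1) ^ (1 - b) * (1 + (1 - b) * -(1 / (x + 1)))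
      = (x + 1) ^ (1 - b) - (1 - b) * (x + 1) ^ (-b) := by
    rw [hpow]; field_simp; ring
  linarith

theorem stmt5 (a b : ℝ) (ha : 0 < a) (hb0 : 0 < b) (hb1 : b < 1)
    (hcond : a * (1 - b) * (2 : ℝ) ^ (2 - b) - a * b * (1 - b) * (2 : ℝ) ^ (-b) - 1 ≥ 0) :
    ∀ k : ℕ, 2 ≤ k →
      2 / Real.sqrt ((1 + a * (k : ℝ) ^ (-b)) * k * ((1 + a * (k : ℝ) ^ (-b)) * k + 2)) ≤
        alphaBar k := by
  have hP : 0 < (2 : ℝ) ^ (-b) := by positivity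
  have h4 : (2 : ℝ) ^ (2 - b) = 4 * 2 ^ (-b) := by
    rw [sub_eq_add_neg, Real.rpow_add two_pos]; norm_num
  have h2 : (2 : ℝ) ^ (1 - b) = 2 * 2 ^ (-b) := by
    rw [sub_eq_add_neg, Real.rpow_add two_pos]; norm_num
  rw [h4] at hcond
  have hapos : 0 < a * 2 ^ (-b) := by positivity
  -- the two consequences of the hypothesis `a (1-b) (4-b) 2^{-b} ≥ 1`
  have hc1 : 1 ≤ 4 * (a * (1 - b) * 2 ^ (-b)) := by
    have : 0 ≤ a * b * (1 - b) * 2 ^ (-b) := by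
      have : 0 < 1 - b := by linarith
      positivity
    linarith
  have hc2 : 1 / 4 ≤ a * 2 ^ (-b) := by nlinarith [mul_pos hapos hb0]
  have hsk : ∀ k : ℕ, 2 ≤ k →
      (1 + a * (k : ℝ) ^ (-b)) * k = k + a * (k : ℝ) ^ (1 - b) := by
    intro k hk
    have hk0 : (0 : ℝ) < k := by exact_mod_cast (by omega : 0 < k)
    rw [sub_eq_add_neg, Real.rpow_add hk0, Real.rpow_one]; ring
  have key : ∀ k : ℕ, 2 ≤ k → 4 / alphaBar k ^ 2 ≤
      (k + a * (k : ℝ) ^ (1 - b)) * (k + a * (k : ℝ) ^ (1 - b) + 2) := by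
    intro k hk
    induction k, hk using Nat.le_induction with
    | base =>
      rw [four_div_alphaBar_sq 0]
      have h5 : √(1 + 4 / alphaBar (0 + 1) ^ 2) = √5 := by norm_num [alphaBar]
      have hs : √(5 : ℝ) ≤ 9 / 4 := by
        rw [Real.sqrt_le_left (by norm_num)]; norm_num
      have hsq : √(5 : ℝ) ^ 2 = 5 := Real.sq_sqrt (by norm_num)
      rw [h5]
      push_cast
      rw [h2]
      nlinarith
    | succ k hk ih =>
      obtain ⟨m, rfl⟩ : ∃ m, k = m + 1 := ⟨k - 1, by omega⟩
      rw [four_div_alphaBar_sq m]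
      generalize hx : ((m + 1 : ℕ) : ℝ) = x at ih
      have hx2 : (2 : ℝ) ≤ x := by rw [← hx]; exact_mod_cast hk
      have hcast : ((m + 1 + 1 : ℕ) : ℝ) = x + 1 := by rw [← hx]; push_cast; ring
      rw [hcast]
      have hy : 0 < a * x ^ (1 - b) := by positivity
      have hroot : √(1 + 4 / alphaBar (m + 1) ^ 2) ≤ x + a * x ^ (1 - b) + 1 := by
        rw [Real.sqrt_le_left (by positivity)]
        nlinarith
      have htan := rpow_sub_rpow_ge hb0 hb1 (by linarith : 0 < x)
      have hQ : 0 < (x + 1) ^ (-b) := by positivity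
      have hmono : 2 * (2 : ℝ) ^ (-b) ≤ (x + 1) * (x + 1) ^ (-b) := by
        have h := Real.rpow_le_rpow (by norm_num) (by linarith : (2 : ℝ) ≤ x + 1)
          (by linarith : 0 ≤ 1 - b)
        have he : (x + 1) ^ (1 - b) = (x + 1) * (x + 1) ^ (-b) := by
          rw [sub_eq_add_neg, Real.rpow_add (by linarith), Real.rpow_one]
        rwa [h2, he] at h
      have hc : 0 < a * (1 - b) := mul_pos ha (by linarith)
      obtain ⟨δ, hδ⟩ : ∃ δ, δ = a * (x + 1) ^ (1 - b) - a * x ^ (1 - b) := ⟨_, rfl⟩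
      have hδ1 : a * (1 - b) * (x + 1) ^ (-b) ≤ δ := by
        have := mul_le_mul_of_nonneg_left htan ha.le
        rw [hδ]; linarith
      have hδ0 : 0 < δ := lt_of_lt_of_le (mul_pos hc hQ) hδ1
      have hδx : 1 ≤ 2 * (δ * (x + 1)) := by
        have e1 := mul_le_mul_of_nonneg_left hmono hc.le
        have e2 := mul_le_mul_of_nonneg_right hδ1 (by linarith : 0 ≤ x + 1)
        linarith
      have hsq : (1 + √(1 + 4 / alphaBar (m + 1) ^ 2)) ^ 2 ≤ (x + a * x ^ (1 - b) + 2) ^ 2 :=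
        pow_le_pow_left₀ (by positivity) (by linarith) 2
      have hnext : a * (x + 1) ^ (1 - b) = a * x ^ (1 - b) + δ := by rw [hδ]; ring
      rw [hnext]
      nlinarith [mul_pos hδ0 hy, sq_nonneg δ]
  intro k hk
  have hα := alphaBar_pos k
  rw [hsk k hk]
  have hroot : 2 / alphaBar k ≤
      √((k + a * (k : ℝ) ^ (1 - b)) * (k + a * (k : ℝ) ^ (1 - b) + 2)) := by
    apply Real.le_sqrt_of_sq_le
    rw [div_pow]
    convert key k hk using 2
    norm_num
  have hpos : 0 < 2 / alphaBar k := by positivity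
  rw [div_le_iff₀ (hpos.trans_le hroot), mul_comm, ← div_le_iff₀ hα]
  exact hroot
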